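/- All antichains in the generalized Young's lattice are finite: every collection of finite order ideals of ℕⁿ that are pairwise incomparable under inclusion is a finite collection. -/

import Mathlib

/-!
A finite lower set is generated by the list of its elements, and the lower set generated by a list
`l₁` lies inside the one generated by `l₂` as soon as every entry of `l₁` is below some entry of
`l₂`, in particular when `l₁` embeds in `l₂` in the sense of Higman's lemma. By Dickson's lemma `ℕⁿ`
is well-quasi-ordered, so by Higman's lemma the lists over it are as well, and hence so are the
finitely generated lower sets under inclusion.
-/

theorem exists_mem_of_sublistForall₂ {α β : Type*} {r : α → β → Prop} {l₁ : List α} {l₂ : List β}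
    (h : List.SublistForall₂ r l₁ l₂) {a : α} (ha : a ∈ l₁) : ∃ b ∈ l₂, r a b := by
  induction h with
  | nil => simp at ha
  | cons hab _ ih =>
    obtain rfl | ha := List.mem_cons.1 ha
    · exact ⟨_, List.mem_cons_self, hab⟩
    · obtain ⟨b, hb, hr⟩ := ih ha
      exact ⟨b, List.mem_cons_of_mem _ hb, hr⟩
  | cons_right _ ih =>
    obtain ⟨b, hb, hr⟩ := ih ha
    exact ⟨b, List.mem_cons_of_mem _ hb, hr⟩

section Preorder

variable {α : Type*} [Preorder α]

theorem lowerClosure_le_lowerClosure_of_sublistForall₂ {l₁ l₂ : List α}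
    (h : List.SublistForall₂ (· ≤ ·) l₁ l₂) :
    lowerClosure {a | a ∈ l₁} ≤ lowerClosure {a | a ∈ l₂} :=
  lowerClosure_le.2 fun _ ha ↦ mem_lowerClosure.2 (exists_mem_of_sublistForall₂ h ha)

theorem partiallyWellOrderedOn_lowerClosure_of_finite_subset {s : Set α} (hs : s.IsPWO) :
    {D : Set α | ∃ t ⊆ s, t.Finite ∧ lowerClosure t = D}.PartiallyWellOrderedOn (· ⊆ ·) := by
  have higman := Set.PartiallyWellOrderedOn.partiallyWellOrderedOn_sublistForall₂ (· ≤ ·) hs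
  refine (higman.image_of_monotone_on (f := fun l ↦ (lowerClosure {a | a ∈ l} : Set α))
    fun _ _ _ _ h ↦ lowerClosure_le_lowerClosure_of_sublistForall₂ h).mono ?_
  rintro _ ⟨t, hts, ht, rfl⟩
  exact ⟨ht.toFinset.toList, fun a ha ↦ hts (by simpa using ha), by simp⟩

theorem generalizedYoung_no_infinite_antichain_general [WellQuasiOrderedLE α] (𝓐 : Set (Set α))
    (hfg : ∀ D ∈ 𝓐, ∃ t : Set α, t.Finite ∧ lowerClosure t = D)
    (hac : IsAntichain (· ⊆ ·) 𝓐) : 𝓐.Finite := by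
  have hpwo := partiallyWellOrderedOn_lowerClosure_of_finite_subset
    (Set.isPWO_of_wellQuasiOrderedLE (Set.univ : Set α))
  refine hac.finite_of_partiallyWellOrderedOn (hpwo.mono fun D hD ↦ ?_)
  obtain ⟨t, ht, htD⟩ := hfg D hD
  exact ⟨t, t.subset_univ, ht, htD⟩

end Preorder

/-- **Antichains in the generalized Young's lattice are finite.**  Every collection of
finite order ideals (finite lower sets) of `ℕⁿ`, pairwise incomparable under
inclusion, is finite. -/
theorem generalizedYoung_no_infinite_antichain {n : ℕ}
    (𝓐 : Set (Set (Fin n → ℕ)))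
    (hlow : ∀ D ∈ 𝓐, IsLowerSet D ∧ D.Finite)
    (hac : IsAntichain (· ⊆ ·) 𝓐) : 𝓐.Finite :=
  generalizedYoung_no_infinite_antichain_general 𝓐
    (fun D hD ↦ ⟨D, (hlow D hD).2, (hlow D hD).1.lowerClosure⟩) hac
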